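/- arXiv:2003.10277 — 2 statements merged into one kernel-verified Lean document; each statement's English description precedes it below -/
import Mathlib

section
/- Let μ and μ' be distinct stable matchings. The extreme points x_μ and x_μ' of P_SMT are adjacent if and only if Γ*(μ,μ') has exactly one nontrivial weakly connected component. -/
/-!
A stable matching is a set of vertices of `Γ`, at most one for each man and each woman, such that
every acceptable pair is in it or has an edge into it. A vertex of `Γ*(μ, μ')` outside `μ ∪ μ'` is
strictly above `μ` and weakly below `μ'` for one of its two agents, and the other way round for
the other agent (`mem_starV_iff`). The isolated vertices of `Γ*(μ, μ')` are the pairs in `μ ∩ μ'`.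

If `C` is a union of components of `Γ*(μ, μ')`, exchanging `μ` and `μ'` inside `C` produces two
stable matchings with characteristic vectors summing to `x_μ + x_μ'` (`isStable_glue`). With two
nontrivial components this gives a second way of writing the midpoint, since each nontrivial
component meets the symmetric difference of `μ` and `μ'`.

Conversely, let `ν` have positive weight in a convex combination equal to the midpoint. Every
inequality valid for the stable matchings of the combination and tight at `μ` and `μ'` is tight at
`ν`. This forces `ν ⊆ μ ∪ μ'` and shows that at every agent `ν` coincides with `μ` or with `μ'`
(`agreeM_or`, `agreeW_or`). For a vertex outside `μ ∪ μ'`, exactly one pair of `μ` and one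
pair of `μ'` dominate it, so `ν` contains exactly one of the two; hence both agents of a nonisolated
vertex make the same choice between `μ` and `μ'` (`agreeM_iff_agreeW`). The choice is therefore
constant on components, and a single nontrivial component leaves only `ν = μ` and `ν = μ'`.
-/

open scoped Classical

/-- An instance of the stable marriage problem with ties: men `M`, women `W`,
acceptable pairs `Acc`, and for each man (resp. woman) a total preorder on the
acceptable partners. `mle m w w'` means `w ≤_m w'`, `wle w m m'` means `m ≤_w m'`. -/
structure SMTI (M W : Type*) where
  Acc : Set (M × W)
  mle : M → W → W → Prop
  wle : W → M → M → Prop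
  mle_refl : ∀ m w, (m, w) ∈ Acc → mle m w w
  mle_trans : ∀ m w₁ w₂ w₃, mle m w₁ w₂ → mle m w₂ w₃ → mle m w₁ w₃
  mle_total : ∀ m w w', (m, w) ∈ Acc → (m, w') ∈ Acc → mle m w w' ∨ mle m w' w
  mle_mem : ∀ m w w', mle m w w' → (m, w) ∈ Acc ∧ (m, w') ∈ Acc
  wle_refl : ∀ w m, (m, w) ∈ Acc → wle w m m
  wle_trans : ∀ w m₁ m₂ m₃, wle w m₁ m₂ → wle w m₂ m₃ → wle w m₁ m₃
  wle_total : ∀ w m m', (m, w) ∈ Acc → (m', w) ∈ Acc → wle w m m' ∨ wle w m' m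
  wle_mem : ∀ w m m', wle w m m' → (m, w) ∈ Acc ∧ (m', w) ∈ Acc

namespace SMTI

variable {M W : Type*} (I : SMTI M W)

/-- `≤_m` extended to `Option W`, where `none` (being single) is strictly below
every acceptable partner. -/
def mleO (m : M) : Option W → Option W → Prop
  | none, none => True
  | none, some w => (m, w) ∈ I.Acc
  | some _, none => False
  | some w, some w' => I.mle m w w'

/-- `≤_w` extended to `Option M`. -/
def wleO (w : W) : Option M → Option M → Prop
  | none, none => True
  | none, some m => (m, w) ∈ I.Acc
  | some _, none => False
  | some m, some m' => I.wle w m m'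

/-- strict version of `mleO` -/
def mltO (m : M) (a b : Option W) : Prop := I.mleO m a b ∧ ¬ I.mleO m b a

/-- strict version of `wleO` -/
def wltO (w : W) (a b : Option M) : Prop := I.wleO w a b ∧ ¬ I.wleO w b a

/-- A matching: a set of acceptable pairs in which every man and every woman
occurs at most once. -/
def IsMatching (μ : Set (M × W)) : Prop :=
  μ ⊆ I.Acc ∧ (∀ m w w', (m, w) ∈ μ → (m, w') ∈ μ → w = w') ∧
    (∀ m m' w, (m, w) ∈ μ → (m', w) ∈ μ → m = m')

/-- the partner `μ(m)` of a man `m` (`none` if `m` is single) -/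
noncomputable def mpartner (μ : Set (M × W)) (m : M) : Option W :=
  if h : ∃ w, (m, w) ∈ μ then some h.choose else none

/-- the partner `μ(w)` of a woman `w` (`none` if `w` is single) -/
noncomputable def wpartner (μ : Set (M × W)) (w : W) : Option M :=
  if h : ∃ m, (m, w) ∈ μ then some h.choose else none

/-- A stable matching: no acceptable pair is blocking. -/
def IsStable (μ : Set (M × W)) : Prop :=
  I.IsMatching μ ∧ ∀ p ∈ I.Acc,
    I.mleO p.1 (some p.2) (mpartner μ p.1) ∨ I.wleO p.2 (some p.1) (wpartner μ p.2)

/-- `between_m(a, b, c)` -/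
def betweenM (m : M) (a b c : Option W) : Prop :=
  a = b ∨ a = c ∨ (I.mltO m b a ∧ I.mleO m a c) ∨ (I.mltO m c a ∧ I.mleO m a b)

/-- `between_w(a, b, c)` -/
def betweenW (w : W) (a b c : Option M) : Prop :=
  a = b ∨ a = c ∨ (I.wltO w b a ∧ I.wleO w a c) ∨ (I.wltO w c a ∧ I.wleO w a b)

/-- the (directed) edge relation of the marriage graph `Γ` -/
def gammaEdge (p q : M × W) : Prop :=
  p ∈ I.Acc ∧ q ∈ I.Acc ∧
    ((p.1 = q.1 ∧ p.2 ≠ q.2 ∧ I.mle p.1 p.2 q.2) ∨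
      (p.2 = q.2 ∧ p.1 ≠ q.1 ∧ I.wle p.2 p.1 q.1))

/-- the vertex set of `Γ*(μ, μ')` -/
noncomputable def starV (μ μ' : Set (M × W)) : Set (M × W) :=
  {p | p ∈ I.Acc ∧
    I.betweenM p.1 (some p.2) (mpartner μ p.1) (mpartner μ' p.1) ∧
    I.betweenW p.2 (some p.1) (wpartner μ p.2) (wpartner μ' p.2)}

/-- undirected adjacency inside the subgraph of `Γ` induced by the vertex set `S` -/
def adjIn (S : Set (M × W)) (p q : M × W) : Prop :=
  p ∈ S ∧ q ∈ S ∧ (I.gammaEdge p q ∨ I.gammaEdge q p)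

/-- `p` and `q` lie in the same weakly connected component of the subgraph of `Γ`
induced by `S` -/
def connIn (S : Set (M × W)) (p q : M × W) : Prop :=
  p ∈ S ∧ q ∈ S ∧ Relation.ReflTransGen (I.adjIn S) p q

/-- `p` is an isolated vertex of the subgraph of `Γ` induced by `S` -/
def IsIsolated (S : Set (M × W)) (p : M × W) : Prop :=
  p ∈ S ∧ ∀ q, ¬ I.adjIn S p q

/-- `C` is a nontrivial weakly connected component of the subgraph of `Γ`
induced by `S` -/
def IsNontrivialComp (S : Set (M × W)) (C : Set (M × W)) : Prop :=
  (∃ v ∈ S, C = {u | I.connIn S v u}) ∧ ¬ C.Subsingleton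

/-- `B` is the vertex set of a principal block (`P^m` or `P^w`) of the subgraph
of `Γ` induced by `S` -/
def IsPrincipalBlock (S : Set (M × W)) (B : Set (M × W)) : Prop :=
  (∃ m : M, B = {p ∈ S | p.1 = m}) ∨ (∃ w : W, B = {p ∈ S | p.2 = w})

/-- characteristic vector `x_ν ∈ ℝ^A` of a set of pairs -/
noncomputable def chi (ν : Set (M × W)) : M × W → ℝ := fun p => if p ∈ ν then 1 else 0

/-- standard basis vector `e_v` -/
noncomputable def eVec (v : M × W) : M × W → ℝ := fun p => if p = v then 1 else 0

/-- dot product on `ℝ^{M × W}` -/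
noncomputable def dotP [Fintype M] [Fintype W] (α x : M × W → ℝ) : ℝ := ∑ p, α p * x p

/-- `E`: the span of all vectors `α` (supported on the acceptable pairs) for which
there is `β` so that `α · x ≥ β` is valid for all stable matchings and tight at
both `μ` and `μ'`. -/
noncomputable def Espace [Fintype M] [Fintype W] (μ μ' : Set (M × W)) :
    Submodule ℝ (M × W → ℝ) :=
  Submodule.span ℝ {α | (∀ p, p ∉ I.Acc → α p = 0) ∧ ∃ β : ℝ,
    (∀ ν, I.IsStable ν → β ≤ dotP α (chi ν)) ∧
    dotP α (chi μ) = β ∧ dotP α (chi μ') = β}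

/-- `a` is linked to `b`: `E` contains `λ e_a + γ e_b` with `λ ≠ 0`. -/
def linked [Fintype M] [Fintype W] (μ μ' : Set (M × W)) (a b : M × W) : Prop :=
  ∃ l g : ℝ, l ≠ 0 ∧ l • eVec a + g • eVec b ∈ I.Espace μ μ'

/-- `x_μ` and `x_μ'` are adjacent extreme points of `P_SMT`: they are distinct, and
whenever their midpoint is a convex combination of extreme points (characteristic
vectors of stable matchings), only `x_μ` and `x_μ'` get nonzero weight. -/
def AdjacentSM [Fintype M] [Fintype W] (μ μ' : Set (M × W)) : Prop :=
  chi μ ≠ chi μ' ∧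
  ∀ (T : Finset (Set (M × W))) (c : Set (M × W) → ℝ),
    (∀ ν ∈ T, I.IsStable ν) → (∀ ν ∈ T, 0 ≤ c ν) → (∑ ν ∈ T, c ν) = 1 →
    (∑ ν ∈ T, c ν • chi ν) = (2⁻¹ : ℝ) • (chi μ + chi μ') →
    ∀ ν ∈ T, c ν ≠ 0 → chi ν = chi μ ∨ chi ν = chi μ'

end SMTI

namespace SMTI

variable {M W : Type*}

/-! ### Partners and domination -/

/-- The man of `p` has a partner in `μ` that he likes at least as much as the woman of `p`. -/
def MD (I : SMTI M W) (μ : Set (M × W)) (p : M × W) : Prop :=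
  ∃ w, (p.1, w) ∈ μ ∧ I.mle p.1 p.2 w

/-- The woman of `p` has a partner in `μ` that she likes at least as much as the man of `p`. -/
def WD (I : SMTI M W) (μ : Set (M × W)) (p : M × W) : Prop :=
  ∃ m, (m, p.2) ∈ μ ∧ I.wle p.2 p.1 m

lemma mpartner_eq_some {I : SMTI M W} {μ : Set (M × W)} (h : I.IsMatching μ) (m : M) (w : W) :
    mpartner μ m = some w ↔ (m, w) ∈ μ := by
  unfold mpartner
  split_ifs with hx
  · rw [Option.some_inj]
    exact ⟨fun e => e ▸ hx.choose_spec, fun hw => h.2.1 _ _ _ hx.choose_spec hw⟩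
  · simp only [false_iff]
    exact fun hw => hx ⟨w, hw⟩

lemma wpartner_eq_some {I : SMTI M W} {μ : Set (M × W)} (h : I.IsMatching μ) (m : M) (w : W) :
    wpartner μ w = some m ↔ (m, w) ∈ μ := by
  unfold wpartner
  split_ifs with hx
  · rw [Option.some_inj]
    exact ⟨fun e => e ▸ hx.choose_spec, fun hw => h.2.2 _ _ _ hx.choose_spec hw⟩
  · simp only [false_iff]
    exact fun hw => hx ⟨m, hw⟩

lemma mleO_partner {I : SMTI M W} {μ : Set (M × W)} (h : I.IsMatching μ) (p : M × W) :
    I.mleO p.1 (some p.2) (mpartner μ p.1) ↔ I.MD μ p := by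
  have key := mpartner_eq_some h p.1
  unfold MD
  rcases hp : mpartner μ p.1 with _ | w
  · simp only [hp, reduceCtorEq, false_iff] at key
    simp [mleO, key]
  · simp only [hp, Option.some_inj] at key
    simp [mleO, ← key]

lemma wleO_partner {I : SMTI M W} {μ : Set (M × W)} (h : I.IsMatching μ) (p : M × W) :
    I.wleO p.2 (some p.1) (wpartner μ p.2) ↔ I.WD μ p := by
  have key := fun m => wpartner_eq_some h m p.2
  unfold WD
  rcases hp : wpartner μ p.2 with _ | w
  · simp only [hp, reduceCtorEq, false_iff] at key
    simp [wleO, key]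
  · simp only [hp, Option.some_inj] at key
    simp [wleO, ← key]

lemma mltO_partner {I : SMTI M W} {μ : Set (M × W)} (h : I.IsMatching μ) {p : M × W}
    (hp : p ∈ I.Acc) : I.mltO p.1 (mpartner μ p.1) (some p.2) ↔ ¬ I.MD μ p := by
  rw [← mleO_partner h, mltO, and_iff_right_iff_imp]
  intro hn
  rcases hq : mpartner μ p.1 with _ | w
  · exact hp
  · rw [hq] at hn
    exact (I.mle_total _ _ _ hp (h.1 ((mpartner_eq_some h _ _).1 hq))).resolve_left hn

lemma wltO_partner {I : SMTI M W} {μ : Set (M × W)} (h : I.IsMatching μ) {p : M × W}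
    (hp : p ∈ I.Acc) : I.wltO p.2 (wpartner μ p.2) (some p.1) ↔ ¬ I.WD μ p := by
  rw [← wleO_partner h, wltO, and_iff_right_iff_imp]
  intro hn
  rcases hq : wpartner μ p.2 with _ | m
  · exact hp
  · rw [hq] at hn
    exact (I.wle_total _ _ _ hp (h.1 ((wpartner_eq_some h _ _).1 hq))).resolve_left hn

lemma isStable_iff {I : SMTI M W} {μ : Set (M × W)} :
    I.IsStable μ ↔ I.IsMatching μ ∧ ∀ p ∈ I.Acc, I.MD μ p ∨ I.WD μ p := by
  unfold IsStable
  refine and_congr_right fun h => forall₂_congr fun p _ => ?_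
  rw [mleO_partner h, wleO_partner h]

lemma IsStable.dom {I : SMTI M W} {μ : Set (M × W)} (h : I.IsStable μ) {p : M × W}
    (hp : p ∈ I.Acc) : I.MD μ p ∨ I.WD μ p := (isStable_iff.1 h).2 p hp

lemma MD_of_mem {I : SMTI M W} {μ : Set (M × W)} (h : I.IsStable μ) {p : M × W} (hp : p ∈ μ) :
    I.MD μ p := ⟨p.2, hp, I.mle_refl _ _ (h.1.1 hp)⟩

lemma WD_of_mem {I : SMTI M W} {μ : Set (M × W)} (h : I.IsStable μ) {p : M × W} (hp : p ∈ μ) :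
    I.WD μ p := ⟨p.1, hp, I.wle_refl _ _ (h.1.1 hp)⟩

/-! ### The graph `Γ*(μ, μ')` -/

/-- Outside `μ ∪ μ'`, a vertex of `Γ*(μ, μ')` is dominated by exactly one of the two matchings on
the man's side, and by exactly the other one on the woman's side. -/
lemma mem_starV_iff {I : SMTI M W} {μ μ' : Set (M × W)} (hμ : I.IsStable μ)
    (hμ' : I.IsStable μ') (p : M × W) :
    p ∈ I.starV μ μ' ↔ p ∈ μ ∨ p ∈ μ' ∨
      (p ∈ I.Acc ∧ ((I.MD μ p ∧ ¬ I.MD μ' p ∧ ¬ I.WD μ p ∧ I.WD μ' p) ∨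
        (¬ I.MD μ p ∧ I.MD μ' p ∧ I.WD μ p ∧ ¬ I.WD μ' p))) := by
  unfold starV betweenM betweenW
  have a1 := mpartner_eq_some hμ.1 p.1 p.2
  have a2 := mpartner_eq_some hμ'.1 p.1 p.2
  have b1 := wpartner_eq_some hμ.1 p.1 p.2
  have b2 := wpartner_eq_some hμ'.1 p.1 p.2
  have c1 := @hμ.1.1 p
  have c2 := @hμ'.1.1 p
  by_cases hp : p ∈ I.Acc
  · rw [eq_comm] at a1 a2 b1 b2
    have d1 := hμ.dom hp
    have d2 := hμ'.dom hp
    simp only [Set.mem_ofPred_eq, mltO_partner hμ.1 hp, mltO_partner hμ'.1 hp,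
      wltO_partner hμ.1 hp, wltO_partner hμ'.1 hp, mleO_partner hμ.1, mleO_partner hμ'.1,
      wleO_partner hμ.1, wleO_partner hμ'.1, a1, a2, b1, b2]
    clear a1 a2 b1 b2 c1 c2
    by_cases m1 : p ∈ μ
    · simp [m1, hp]
    by_cases m2 : p ∈ μ'
    · simp [m2, hp]
    by_cases e1 : I.MD μ p <;> by_cases e2 : I.MD μ' p <;> by_cases e3 : I.WD μ p <;>
      by_cases e4 : I.WD μ' p <;> simp_all
  · have m1 : p ∉ μ := fun h => hp (c1 h)
    have m2 : p ∉ μ' := fun h => hp (c2 h)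
    simp [hp, m1, m2]

lemma starV_comm {I : SMTI M W} {μ μ' : Set (M × W)} (hμ : I.IsStable μ)
    (hμ' : I.IsStable μ') : I.starV μ' μ = I.starV μ μ' := by
  ext p
  rw [mem_starV_iff hμ hμ', mem_starV_iff hμ' hμ]
  tauto

lemma adjIn_symm {I : SMTI M W} {S : Set (M × W)} {p q : M × W} (h : I.adjIn S p q) :
    I.adjIn S q p := ⟨h.2.1, h.1, h.2.2.symm⟩

lemma adjIn_cases {I : SMTI M W} {S : Set (M × W)} {p q : M × W} (h : I.adjIn S p q) :
    (p.1 = q.1 ∧ p.2 ≠ q.2 ∧ (I.mle p.1 p.2 q.2 ∨ I.mle p.1 q.2 p.2)) ∨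
      (p.2 = q.2 ∧ p.1 ≠ q.1 ∧ (I.wle p.2 p.1 q.1 ∨ I.wle p.2 q.1 p.1)) := by
  obtain ⟨-, -, ⟨-, -, ⟨h1, h2, h3⟩ | ⟨h1, h2, h3⟩⟩ | ⟨-, -, ⟨h1, h2, h3⟩ | ⟨h1, h2, h3⟩⟩⟩ := h
  · exact Or.inl ⟨h1, h2, Or.inl h3⟩
  · exact Or.inr ⟨h1, h2, Or.inl h3⟩
  · exact Or.inl ⟨h1.symm, h2.symm, Or.inr (h1 ▸ h3)⟩
  · exact Or.inr ⟨h1.symm, h2.symm, Or.inr (h1 ▸ h3)⟩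

lemma adjIn_man {I : SMTI M W} {S : Set (M × W)} (hS : S ⊆ I.Acc) {m : M} {w w' : W}
    (h : (m, w) ∈ S) (h' : (m, w') ∈ S) (hne : w ≠ w') : I.adjIn S (m, w) (m, w') := by
  refine ⟨h, h', ?_⟩
  rcases I.mle_total m w w' (hS h) (hS h') with hl | hl
  · exact Or.inl ⟨hS h, hS h', Or.inl ⟨rfl, hne, hl⟩⟩
  · exact Or.inr ⟨hS h', hS h, Or.inl ⟨rfl, hne.symm, hl⟩⟩

lemma adjIn_woman {I : SMTI M W} {S : Set (M × W)} (hS : S ⊆ I.Acc) {m m' : M} {w : W}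
    (h : (m, w) ∈ S) (h' : (m', w) ∈ S) (hne : m ≠ m') : I.adjIn S (m, w) (m', w) := by
  refine ⟨h, h', ?_⟩
  rcases I.wle_total w m m' (hS h) (hS h') with hl | hl
  · exact Or.inl ⟨hS h, hS h', Or.inr ⟨rfl, hne, hl⟩⟩
  · exact Or.inr ⟨hS h', hS h, Or.inr ⟨rfl, hne.symm, hl⟩⟩

lemma starV_subset {I : SMTI M W} {μ μ' : Set (M × W)} : I.starV μ μ' ⊆ I.Acc := fun _ h => h.1

lemma not_adjIn_of_mem_inter {I : SMTI M W} {μ μ' : Set (M × W)} (hμ : I.IsStable μ)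
    (hμ' : I.IsStable μ') {v q : M × W} (hv : v ∈ μ) (hv' : v ∈ μ') :
    ¬ I.adjIn (I.starV μ μ') v q := by
  intro h
  have hq := h.2.1
  obtain ⟨m, w⟩ := v
  obtain ⟨m', w'⟩ := q
  rw [mem_starV_iff hμ hμ'] at hq
  rcases adjIn_cases h with ⟨h1, h2, -⟩ | ⟨h1, h2, -⟩
  · simp only at h1 h2
    subst h1
    rcases hq with hq | hq | ⟨-, ⟨⟨x, hx, hl⟩, hn, -⟩ | ⟨hn, ⟨x, hx, hl⟩, -⟩⟩
    · exact h2 (hμ.1.2.1 _ _ _ hv hq)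
    · exact h2 (hμ'.1.2.1 _ _ _ hv' hq)
    · obtain rfl := hμ.1.2.1 _ _ _ hx hv
      exact hn ⟨_, hv', hl⟩
    · obtain rfl := hμ'.1.2.1 _ _ _ hx hv'
      exact hn ⟨_, hv, hl⟩
  · simp only at h1 h2
    subst h1
    rcases hq with hq | hq | ⟨-, ⟨-, -, hn, ⟨x, hx, hl⟩⟩ | ⟨-, -, ⟨x, hx, hl⟩, hn⟩⟩
    · exact h2 (hμ.1.2.2 _ _ _ hv hq)
    · exact h2 (hμ'.1.2.2 _ _ _ hv' hq)
    · obtain rfl := hμ'.1.2.2 _ _ _ hx hv'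
      exact hn ⟨_, hv, hl⟩
    · obtain rfl := hμ.1.2.2 _ _ _ hx hv
      exact hn ⟨_, hv', hl⟩

/-- Domination of vertices outside a stable matching, as adjacency in an induced subgraph. -/
lemma exists_adjIn_of_not_mem {I : SMTI M W} {S μ : Set (M × W)} (hμ : I.IsStable μ)
    (hS : S ⊆ I.Acc) (hμS : μ ⊆ S) {v : M × W} (hv : v ∈ S) (hn : v ∉ μ) :
    ∃ q ∈ μ, I.adjIn S v q := by
  obtain ⟨m, w⟩ := v
  rcases hμ.dom (hS hv) with ⟨x, hx, -⟩ | ⟨x, hx, -⟩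
  · refine ⟨_, hx, adjIn_man hS hv (hμS hx) ?_⟩
    rintro rfl
    exact hn hx
  · refine ⟨_, hx, adjIn_woman hS hv (hμS hx) ?_⟩
    rintro rfl
    exact hn hx

lemma subset_starV_left {I : SMTI M W} {μ μ' : Set (M × W)} (hμ : I.IsStable μ)
    (hμ' : I.IsStable μ') : μ ⊆ I.starV μ μ' :=
  fun p hp => (mem_starV_iff hμ hμ' p).2 (Or.inl hp)

lemma subset_starV_right {I : SMTI M W} {μ μ' : Set (M × W)} (hμ : I.IsStable μ)
    (hμ' : I.IsStable μ') : μ' ⊆ I.starV μ μ' :=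
  fun p hp => (mem_starV_iff hμ hμ' p).2 (Or.inr (Or.inl hp))

lemma exists_adjIn {I : SMTI M W} {μ μ' : Set (M × W)} (hμ : I.IsStable μ)
    (hμ' : I.IsStable μ') {v : M × W} (hv : v ∈ I.starV μ μ') (hn : ¬ (v ∈ μ ∧ v ∈ μ')) :
    ∃ q, I.adjIn (I.starV μ μ') v q := by
  by_cases h : v ∈ μ
  · obtain ⟨q, -, hq⟩ := exists_adjIn_of_not_mem hμ' starV_subset (subset_starV_right hμ hμ') hv
      (fun h' => hn ⟨h, h'⟩)
    exact ⟨q, hq⟩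
  · obtain ⟨q, -, hq⟩ := exists_adjIn_of_not_mem hμ starV_subset (subset_starV_left hμ hμ') hv h
    exact ⟨q, hq⟩

lemma connIn_refl {I : SMTI M W} {S : Set (M × W)} {v : M × W} (hv : v ∈ S) :
    I.connIn S v v := ⟨hv, hv, Relation.ReflTransGen.refl⟩

lemma connIn_symm {I : SMTI M W} {S : Set (M × W)} {u v : M × W} (h : I.connIn S u v) :
    I.connIn S v u :=
  haveI : Std.Symm (I.adjIn S) := ⟨fun _ _ => adjIn_symm⟩
  ⟨h.2.1, h.1, Std.Symm.symm _ _ h.2.2⟩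

lemma connIn_trans {I : SMTI M W} {S : Set (M × W)} {u v x : M × W} (h : I.connIn S u v)
    (h' : I.connIn S v x) : I.connIn S u x := ⟨h.1, h'.2.1, h.2.2.trans h'.2.2⟩

lemma connIn_of_adjIn {I : SMTI M W} {S : Set (M × W)} {u v : M × W} (h : I.adjIn S u v) :
    I.connIn S u v := ⟨h.1, h.2.1, Relation.ReflTransGen.single h⟩

lemma isNontrivialComp_of {I : SMTI M W} {μ μ' : Set (M × W)} (hμ : I.IsStable μ)
    (hμ' : I.IsStable μ') {v : M × W} (hv : v ∈ I.starV μ μ') (hn : ¬ (v ∈ μ ∧ v ∈ μ')) :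
    I.IsNontrivialComp (I.starV μ μ') {u | I.connIn (I.starV μ μ') v u} := by
  refine ⟨⟨v, hv, rfl⟩, fun hs => ?_⟩
  obtain ⟨q, hq⟩ := exists_adjIn hμ hμ' hv hn
  obtain rfl : v = q := hs (connIn_refl hv) (connIn_of_adjIn hq)
  rcases adjIn_cases hq with h | h
  · exact h.2.1 rfl
  · exact h.2.1 rfl

lemma IsNontrivialComp.exists_mem_symmDiff {I : SMTI M W} {μ μ' : Set (M × W)}
    (hμ : I.IsStable μ) (hμ' : I.IsStable μ') {C : Set (M × W)}
    (hC : I.IsNontrivialComp (I.starV μ μ') C) : ∃ d ∈ C, ¬ (d ∈ μ ↔ d ∈ μ') := by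
  obtain ⟨⟨v, hv, rfl⟩, hs⟩ := hC
  have hn : ¬ (v ∈ μ ∧ v ∈ μ') := by
    rintro ⟨h1, h2⟩
    have key : ∀ u, I.connIn (I.starV μ μ') v u → v = u := by
      rintro u ⟨-, -, hu⟩
      rcases Relation.ReflTransGen.cases_head hu with h | ⟨x, hx, -⟩
      · exact h
      · exact absurd hx (not_adjIn_of_mem_inter hμ hμ' h1 h2)
    exact hs fun a ha b hb => (key a ha).symm.trans (key b hb)
  by_cases h : v ∈ μ
  · exact ⟨v, connIn_refl hv, by tauto⟩
  · obtain ⟨q, hqμ, hq⟩ :=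
      exists_adjIn_of_not_mem hμ starV_subset (subset_starV_left hμ hμ') hv h
    refine ⟨q, connIn_of_adjIn hq, fun hiff => ?_⟩
    exact not_adjIn_of_mem_inter hμ hμ' hqμ (hiff.1 hqμ) (adjIn_symm hq)

/-! ### Exchanging two stable matchings on a union of components -/

/-- The set of pairs equal to `μ` on `C` and to `μ'` off `C`. -/
def glue (C μ μ' : Set (M × W)) : Set (M × W) := (μ ∩ C) ∪ (μ' \ C)

lemma isStable_glue {I : SMTI M W} {μ μ' C : Set (M × W)} (hμ : I.IsStable μ)
    (hμ' : I.IsStable μ')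
    (hC : ∀ p q, I.adjIn (I.starV μ μ') p q → (p ∈ C ↔ q ∈ C)) :
    I.IsStable (glue C μ μ') := by
  have hS : I.starV μ μ' ⊆ I.Acc := starV_subset
  have sl := subset_starV_left hμ hμ'
  have sr := subset_starV_right hμ hμ'
  -- vertices of `Γ*` sharing an agent are on the same side of `C`
  have cm : ∀ {m w w'}, (m, w) ∈ I.starV μ μ' → (m, w') ∈ I.starV μ μ' →
      ((m, w) ∈ C ↔ (m, w') ∈ C) := by
    intro m w w' h h'
    by_cases e : w = w'
    · rw [e]
    · exact hC _ _ (adjIn_man hS h h' e)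
  have cw : ∀ {m m' w}, (m, w) ∈ I.starV μ μ' → (m', w) ∈ I.starV μ μ' →
      ((m, w) ∈ C ↔ (m', w) ∈ C) := by
    intro m m' w h h'
    by_cases e : m = m'
    · rw [e]
    · exact hC _ _ (adjIn_woman hS h h' e)
  refine isStable_iff.2 ⟨⟨?_, ?_, ?_⟩, ?_⟩
  · rintro p (hp | hp)
    · exact hμ.1.1 hp.1
    · exact hμ'.1.1 hp.1
  · rintro m w w' (h | h) (h' | h')
    · exact hμ.1.2.1 _ _ _ h.1 h'.1
    · exact absurd ((cm (sl h.1) (sr h'.1)).1 h.2) h'.2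
    · exact absurd ((cm (sl h'.1) (sr h.1)).1 h'.2) h.2
    · exact hμ'.1.2.1 _ _ _ h.1 h'.1
  · rintro m m' w (h | h) (h' | h')
    · exact hμ.1.2.2 _ _ _ h.1 h'.1
    · exact absurd ((cw (sl h.1) (sr h'.1)).1 h.2) h'.2
    · exact absurd ((cw (sl h'.1) (sr h.1)).1 h'.2) h.2
    · exact hμ'.1.2.2 _ _ _ h.1 h'.1
  · rintro ⟨m, w⟩ hp
    by_cases hM : I.MD μ (m, w) ∧ I.MD μ' (m, w)
    · obtain ⟨⟨x, hx, hxl⟩, ⟨y, hy, hyl⟩⟩ := hM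
      by_cases hc : (m, x) ∈ C
      · exact Or.inl ⟨x, Or.inl ⟨hx, hc⟩, hxl⟩
      · exact Or.inl ⟨y, Or.inr ⟨hy, fun h => hc ((cm (sl hx) (sr hy)).2 h)⟩, hyl⟩
    by_cases hW : I.WD μ (m, w) ∧ I.WD μ' (m, w)
    · obtain ⟨⟨x, hx, hxl⟩, ⟨y, hy, hyl⟩⟩ := hW
      by_cases hc : (x, w) ∈ C
      · exact Or.inr ⟨x, Or.inl ⟨hx, hc⟩, hxl⟩
      · exact Or.inr ⟨y, Or.inr ⟨hy, fun h => hc ((cw (sl hx) (sr hy)).2 h)⟩, hyl⟩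
    have d1 := hμ.dom hp
    have d2 := hμ'.dom hp
    -- the pair is then a vertex of `Γ*`, adjacent to its dominating pairs in `μ` and `μ'`
    have hpS : (m, w) ∈ I.starV μ μ' := by
      rw [mem_starV_iff hμ hμ']
      tauto
    by_cases hc : (m, w) ∈ C
    · rcases d1 with ⟨x, hx, hl⟩ | ⟨x, hx, hl⟩
      · exact Or.inl ⟨x, Or.inl ⟨hx, (cm hpS (sl hx)).1 hc⟩, hl⟩
      · exact Or.inr ⟨x, Or.inl ⟨hx, (cw hpS (sl hx)).1 hc⟩, hl⟩
    · rcases d2 with ⟨x, hx, hl⟩ | ⟨x, hx, hl⟩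
      · exact Or.inl ⟨x, Or.inr ⟨hx, fun h => hc ((cm hpS (sr hx)).2 h)⟩, hl⟩
      · exact Or.inr ⟨x, Or.inr ⟨hx, fun h => hc ((cw hpS (sr hx)).2 h)⟩, hl⟩

lemma chi_injective : Function.Injective (chi : Set (M × W) → M × W → ℝ) := by
  intro a b h
  ext p
  have := congrFun h p
  unfold chi at this
  by_cases ha : p ∈ a <;> by_cases hb : p ∈ b <;> simp_all

lemma chi_glue_add (C μ μ' : Set (M × W)) :
    chi (glue C μ μ') + chi (glue C μ' μ) = chi μ + chi μ' := by
  ext p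
  simp only [chi, glue, Pi.add_apply, Set.mem_union, Set.mem_inter_iff, Set.mem_sdiff]
  by_cases hC : p ∈ C <;> simp [hC, add_comm]

/-- Two different nontrivial components give a second decomposition of the midpoint. -/
lemma comp_unique_of_adjacent [Fintype M] [Fintype W] {I : SMTI M W} {μ μ' : Set (M × W)}
    (hμ : I.IsStable μ) (hμ' : I.IsStable μ') (hadj : I.AdjacentSM μ μ') {C D : Set (M × W)}
    (hC : I.IsNontrivialComp (I.starV μ μ') C) (hD : I.IsNontrivialComp (I.starV μ μ') D) :
    C = D := by
  by_contra hne
  obtain ⟨d, hdC, hd⟩ := hC.exists_mem_symmDiff hμ hμ'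
  obtain ⟨e, heD, he⟩ := hD.exists_mem_symmDiff hμ hμ'
  have hclosed : ∀ p q, I.adjIn (I.starV μ μ') p q → (p ∈ C ↔ q ∈ C) := by
    obtain ⟨⟨v, hv, rfl⟩, -⟩ := hC
    exact fun p q h => ⟨fun hp => connIn_trans hp (connIn_of_adjIn h),
      fun hq => connIn_trans hq (connIn_symm (connIn_of_adjIn h))⟩
  have heC : e ∉ C := by
    intro heC
    obtain ⟨⟨v, hv, rfl⟩, -⟩ := hC
    obtain ⟨⟨u, hu, rfl⟩, -⟩ := hD
    have huv : I.connIn _ u v := connIn_trans heD (connIn_symm heC)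
    apply hne
    ext x
    exact ⟨fun hx => connIn_trans huv hx, fun hx => connIn_trans (connIn_symm huv) hx⟩
  have s1 : I.IsStable (glue C μ μ') := isStable_glue hμ hμ' hclosed
  have s2 : I.IsStable (glue C μ' μ) :=
    isStable_glue hμ' hμ (by rw [starV_comm hμ hμ']; exact hclosed)
  have d1 : d ∈ glue C μ μ' ↔ d ∈ μ := by simp [glue, hdC]
  have d2 : d ∈ glue C μ' μ ↔ d ∈ μ' := by simp [glue, hdC]
  have e1 : e ∈ glue C μ μ' ↔ e ∈ μ' := by simp [glue, heC]
  have hdist : glue C μ μ' ≠ glue C μ' μ := by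
    intro h
    rw [h, d2] at d1
    exact hd d1.symm
  have := hadj.2 {glue C μ μ', glue C μ' μ} (fun _ => 2⁻¹)
    (by
      intro ν hν
      rcases Finset.mem_insert.1 hν with rfl | hν
      · exact s1
      · exact (Finset.mem_singleton.1 hν) ▸ s2)
    (fun _ _ => by norm_num)
    (by rw [Finset.sum_pair hdist]; norm_num)
    (by rw [Finset.sum_pair hdist, ← smul_add, chi_glue_add])
    (glue C μ μ') (Finset.mem_insert_self _ _) (by norm_num)
  rcases this with h | h
  · have h := chi_injective h
    rw [h] at e1
    exact he e1
  · have h := chi_injective h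
    rw [h] at d1
    exact hd d1.symm

/-! ### Matchings occurring in a decomposition of the midpoint -/

/-- A bound on a weighted average that is attained in the mean is attained by every term of
nonzero weight. -/
lemma eq_of_average_eq {ι : Type*} {T : Finset ι} {c g : ι → ℝ} {k : ℝ}
    (hc : ∀ i ∈ T, 0 ≤ c i) (h1 : ∑ i ∈ T, c i = 1) (hg : ∀ i ∈ T, c i ≠ 0 → g i ≤ k)
    (hs : ∑ i ∈ T, c i * g i = k) {i : ι} (hi : i ∈ T) (hci : c i ≠ 0) : g i = k := by
  have h0 : ∑ i ∈ T, c i * (k - g i) = 0 := by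
    simp only [mul_sub, Finset.sum_sub_distrib, ← Finset.sum_mul, h1, hs]
    ring
  have hnn : ∀ j ∈ T, 0 ≤ c j * (k - g j) := by
    intro j hj
    by_cases h : c j = 0
    · simp [h]
    · exact mul_nonneg (hc j hj) (sub_nonneg.2 (hg j hj h))
  have := (Finset.sum_eq_zero_iff_of_nonneg hnn).1 h0 i hi
  have := (mul_eq_zero.1 this).resolve_left hci
  linarith

/-- The constraints satisfied by a stable matching `ν` of positive weight in a decomposition of
the midpoint of `x_μ` and `x_μ'`: each records the tightness at `ν` of an inequality that is tight
at `μ` and at `μ'`. -/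
structure InFace (I : SMTI M W) (μ μ' ν : Set (M × W)) : Prop where
  matching : I.IsMatching ν
  sub : ∀ p ∈ ν, p ∈ μ ∨ p ∈ μ'
  inter : ∀ p, p ∈ μ → p ∈ μ' → p ∈ ν
  man : ∀ m w w', (m, w) ∈ μ → (m, w') ∈ μ' → (m, w) ∈ ν ∨ (m, w') ∈ ν
  woman : ∀ m m' w, (m, w) ∈ μ → (m', w) ∈ μ' → (m, w) ∈ ν ∨ (m', w) ∈ ν
  mw : ∀ m w m' w', (m, w) ∈ I.Acc → ¬ I.MD μ (m, w) → ¬ I.WD μ' (m, w) →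
    (m, w') ∈ μ' → I.mle m w w' → (m', w) ∈ μ → I.wle w m m' →
    ((m, w') ∈ ν ↔ (m', w) ∉ ν)
  wm : ∀ m w m' w', (m, w) ∈ I.Acc → ¬ I.MD μ' (m, w) → ¬ I.WD μ (m, w) →
    (m, w') ∈ μ → I.mle m w w' → (m', w) ∈ μ' → I.wle w m m' →
    ((m, w') ∈ ν ↔ (m', w) ∉ ν)

section decomposition

variable {I : SMTI M W} {μ μ' : Set (M × W)} {T : Finset (Set (M × W))} {c : Set (M × W) → ℝ}

lemma sum_coord (hs : ∑ ν ∈ T, c ν • chi ν = (2⁻¹ : ℝ) • (chi μ + chi μ')) (p : M × W) :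
    ∑ ν ∈ T, c ν * chi ν p = 2⁻¹ * (chi μ p + chi μ' p) := by
  have := congrFun hs p
  simpa [Finset.sum_apply] using this

lemma chi_of_mem {ν : Set (M × W)} {p : M × W} (h : p ∈ ν) : chi ν p = 1 := if_pos h

lemma chi_of_not_mem {ν : Set (M × W)} {p : M × W} (h : p ∉ ν) : chi ν p = 0 := if_neg h

lemma chi_nonneg (ν : Set (M × W)) (p : M × W) : 0 ≤ chi ν p := by
  unfold chi; split_ifs <;> norm_num

lemma chi_le_one (ν : Set (M × W)) (p : M × W) : chi ν p ≤ 1 := by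
  unfold chi; split_ifs <;> norm_num

lemma face_sub (hc : ∀ ν ∈ T, 0 ≤ c ν) (h1 : ∑ ν ∈ T, c ν = 1)
    (hs : ∑ ν ∈ T, c ν • chi ν = (2⁻¹ : ℝ) • (chi μ + chi μ'))
    {ν : Set (M × W)} (hν : ν ∈ T) (hcν : c ν ≠ 0) (p : M × W) (hp : p ∈ ν) :
    p ∈ μ ∨ p ∈ μ' := by
  by_contra! h
  have := eq_of_average_eq (g := fun ν => - chi ν p) (k := 0) hc h1
    (fun τ _ _ => neg_nonpos.2 (chi_nonneg τ p))
    (by simp only [mul_neg, Finset.sum_neg_distrib, sum_coord hs]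
        simp [chi_of_not_mem h.1, chi_of_not_mem h.2]) hν hcν
  simp [chi_of_mem hp] at this

lemma face_inter (hc : ∀ ν ∈ T, 0 ≤ c ν) (h1 : ∑ ν ∈ T, c ν = 1)
    (hs : ∑ ν ∈ T, c ν • chi ν = (2⁻¹ : ℝ) • (chi μ + chi μ'))
    {ν : Set (M × W)} (hν : ν ∈ T) (hcν : c ν ≠ 0) (p : M × W) (hp : p ∈ μ) (hp' : p ∈ μ') :
    p ∈ ν := by
  by_contra h
  have := eq_of_average_eq (g := fun ν => chi ν p) (k := 1) hc h1
    (fun τ _ _ => chi_le_one τ p)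
    (by rw [sum_coord hs, chi_of_mem hp, chi_of_mem hp']; norm_num) hν hcν
  simp [chi_of_not_mem h] at this

/-- If no matching of the combination contains both `p ∈ μ \ μ'` and `q ∈ μ' \ μ`, then each
contains one of them. -/
lemma face_or (hc : ∀ ν ∈ T, 0 ≤ c ν) (h1 : ∑ ν ∈ T, c ν = 1)
    (hs : ∑ ν ∈ T, c ν • chi ν = (2⁻¹ : ℝ) • (chi μ + chi μ'))
    {ν : Set (M × W)} (hν : ν ∈ T) (hcν : c ν ≠ 0) {p q : M × W} (hp : p ∈ μ) (hp' : p ∉ μ')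
    (hq : q ∉ μ) (hq' : q ∈ μ') (hT : ∀ τ ∈ T, ¬ (p ∈ τ ∧ q ∈ τ)) :
    p ∈ ν ∨ q ∈ ν := by
  by_contra! h
  have := eq_of_average_eq (g := fun ν => chi ν p + chi ν q) (k := 1) hc h1
    (fun τ hτ _ => by
      have := hT τ hτ
      by_cases hpτ : p ∈ τ
      · have hqτ : q ∉ τ := fun h => this ⟨hpτ, h⟩
        simp [chi_of_mem hpτ, chi_of_not_mem hqτ]
      · simp [chi_of_not_mem hpτ, chi_le_one])
    (by
      simp only [mul_add, Finset.sum_add_distrib, sum_coord hs]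
      rw [chi_of_mem hp, chi_of_mem hq', chi_of_not_mem hp', chi_of_not_mem hq]
      norm_num) hν hcν
  simp [chi_of_not_mem h.1, chi_of_not_mem h.2] at this

/-- If every matching of the combination contains `p ∈ μ \ μ'` or `q ∈ μ' \ μ`, then none
contains both. -/
lemma face_not_both (hc : ∀ ν ∈ T, 0 ≤ c ν) (h1 : ∑ ν ∈ T, c ν = 1)
    (hs : ∑ ν ∈ T, c ν • chi ν = (2⁻¹ : ℝ) • (chi μ + chi μ'))
    {ν : Set (M × W)} (hν : ν ∈ T) (hcν : c ν ≠ 0) {p q : M × W} (hp : p ∈ μ) (hp' : p ∉ μ')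
    (hq : q ∉ μ) (hq' : q ∈ μ') (hT : ∀ τ ∈ T, c τ ≠ 0 → p ∈ τ ∨ q ∈ τ) :
    ¬ (p ∈ ν ∧ q ∈ ν) := by
  rintro ⟨hpν, hqν⟩
  have := eq_of_average_eq (g := fun ν => - (chi ν p + chi ν q)) (k := -1) hc h1
    (fun τ hτ hcτ => by
      have a := chi_nonneg τ p
      have b := chi_nonneg τ q
      rcases hT τ hτ hcτ with h | h
      · have := chi_of_mem h
        linarith
      · have := chi_of_mem h
        linarith)
    (by
      simp only [mul_neg, mul_add, Finset.sum_neg_distrib, Finset.sum_add_distrib, sum_coord hs]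
      rw [chi_of_mem hp, chi_of_mem hq', chi_of_not_mem hp', chi_of_not_mem hq]
      norm_num) hν hcν
  simp only [chi_of_mem hpν, chi_of_mem hqν] at this
  norm_num at this

/-- A pair whose only dominating pairs in `μ ∪ μ'` are `(m, w') ∈ μ'` and `(m', w) ∈ μ` has one
of them in every stable matching contained in `μ ∪ μ'`. -/
lemma dom_of_sub {τ : Set (M × W)} (hτ : I.IsStable τ) (hsub : ∀ p ∈ τ, p ∈ μ ∨ p ∈ μ')
    (hμ : I.IsStable μ) (hμ' : I.IsStable μ') {m m' : M} {w w' : W} (hp : (m, w) ∈ I.Acc)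
    (hM : ¬ I.MD μ (m, w)) (hW : ¬ I.WD μ' (m, w)) (hq : (m, w') ∈ μ') (hr : (m', w) ∈ μ) :
    (m', w) ∈ τ ∨ (m, w') ∈ τ := by
  rcases hτ.dom hp with ⟨x, hx, hl⟩ | ⟨x, hx, hl⟩
  · rcases hsub _ hx with h | h
    · exact absurd ⟨x, h, hl⟩ hM
    · exact Or.inr (hμ'.1.2.1 _ _ _ h hq ▸ hx)
  · rcases hsub _ hx with h | h
    · exact Or.inl (hμ.1.2.2 _ _ _ h hr ▸ hx)
    · exact absurd ⟨x, h, hl⟩ hW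

lemma inFace (hμ : I.IsStable μ) (hμ' : I.IsStable μ') (hT : ∀ ν ∈ T, I.IsStable ν)
    (hc : ∀ ν ∈ T, 0 ≤ c ν) (h1 : ∑ ν ∈ T, c ν = 1)
    (hs : ∑ ν ∈ T, c ν • chi ν = (2⁻¹ : ℝ) • (chi μ + chi μ'))
    {ν : Set (M × W)} (hν : ν ∈ T) (hcν : c ν ≠ 0) : InFace I μ μ' ν := by
  have hs' : ∑ ν ∈ T, c ν • chi ν = (2⁻¹ : ℝ) • (chi μ' + chi μ) := by rw [hs, add_comm]
  refine ⟨(hT ν hν).1, face_sub hc h1 hs hν hcν, face_inter hc h1 hs hν hcν, ?_, ?_, ?_, ?_⟩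
  · intro m w w' h h'
    by_cases e : w = w'
    · subst e
      exact Or.inl (face_inter hc h1 hs hν hcν _ h h')
    · exact face_or hc h1 hs hν hcν h (fun x => e (hμ'.1.2.1 _ _ _ x h'))
        (fun x => e (hμ.1.2.1 _ _ _ h x)) h'
        (fun τ hτ hb => e ((hT τ hτ).1.2.1 _ _ _ hb.1 hb.2))
  · intro m m' w h h'
    by_cases e : m = m'
    · subst e
      exact Or.inl (face_inter hc h1 hs hν hcν _ h h')
    · exact face_or hc h1 hs hν hcν h (fun x => e (hμ'.1.2.2 _ _ _ x h'))
        (fun x => e (hμ.1.2.2 _ _ _ h x)) h'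
        (fun τ hτ hb => e ((hT τ hτ).1.2.2 _ _ _ hb.1 hb.2))
  · intro m w m' w' hp hM hW hq hql hr hrl
    have key : ∀ τ ∈ T, c τ ≠ 0 → (m', w) ∈ τ ∨ (m, w') ∈ τ := fun τ hτ hcτ =>
      dom_of_sub (hT τ hτ) (face_sub hc h1 hs hτ hcτ) hμ hμ' hp hM hW hq hr
    have h2 := face_not_both hc h1 hs hν hcν hr (fun h => hW ⟨_, h, hrl⟩)
      (fun h => hM ⟨_, h, hql⟩) hq key
    have h3 := key ν hν hcν
    tauto
  · intro m w m' w' hp hM hW hq hql hr hrl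
    have key : ∀ τ ∈ T, c τ ≠ 0 → (m', w) ∈ τ ∨ (m, w') ∈ τ := fun τ hτ hcτ =>
      dom_of_sub (hT τ hτ) (face_sub hc h1 hs' hτ hcτ) hμ' hμ hp hM hW hq hr
    have h2 := face_not_both hc h1 hs' hν hcν hr (fun h => hW ⟨_, h, hrl⟩)
      (fun h => hM ⟨_, h, hql⟩) hq key
    have h3 := key ν hν hcν
    tauto

end decomposition

/-! ### The choice between `μ` and `μ'` is constant on components -/

/-- The matchings `ν` and `μ` coincide at the man `m` (both may leave him single). -/
def agreeM (ν μ : Set (M × W)) (m : M) : Prop := ∀ w, (m, w) ∈ ν ↔ (m, w) ∈ μ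

/-- The matchings `ν` and `μ` coincide at the woman `w` (both may leave her single). -/
def agreeW (ν μ : Set (M × W)) (w : W) : Prop := ∀ m, (m, w) ∈ ν ↔ (m, w) ∈ μ

section choice

variable {I : SMTI M W} {μ μ' ν : Set (M × W)}

lemma agreeM_of_mem (hμ : I.IsMatching μ) (hν : I.IsMatching ν) {m : M} {w : W}
    (h : (m, w) ∈ μ) (h' : (m, w) ∈ ν) : agreeM ν μ m := fun _ =>
  ⟨fun hx => hν.2.1 _ _ _ h' hx ▸ h, fun hx => hμ.2.1 _ _ _ h hx ▸ h'⟩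

lemma agreeW_of_mem (hμ : I.IsMatching μ) (hν : I.IsMatching ν) {m : M} {w : W}
    (h : (m, w) ∈ μ) (h' : (m, w) ∈ ν) : agreeW ν μ w := fun _ =>
  ⟨fun hx => hν.2.2 _ _ _ h' hx ▸ h, fun hx => hμ.2.2 _ _ _ h hx ▸ h'⟩

lemma agreeM_or (hμ : I.IsStable μ) (hμ' : I.IsStable μ') (hF : InFace I μ μ' ν) (m : M) :
    agreeM ν μ m ∨ agreeM ν μ' m := by
  by_cases hx : ∃ x, (m, x) ∈ ν
  · obtain ⟨x, hx⟩ := hx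
    rcases hF.sub _ hx with h | h
    · exact Or.inl (agreeM_of_mem hμ.1 hF.matching h hx)
    · exact Or.inr (agreeM_of_mem hμ'.1 hF.matching h hx)
  · push Not at hx
    -- a man single in `ν` is single in `μ` or in `μ'`
    by_contra! hn
    unfold agreeM at hn
    simp only [hx, false_iff, not_forall, not_not] at hn
    obtain ⟨⟨w, hw⟩, ⟨w', hw'⟩⟩ := hn
    rcases hF.man _ _ _ hw hw' with h | h
    · exact hx _ h
    · exact hx _ h

lemma agreeW_or (hμ : I.IsStable μ) (hμ' : I.IsStable μ') (hF : InFace I μ μ' ν) (w : W) :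
    agreeW ν μ w ∨ agreeW ν μ' w := by
  by_cases hx : ∃ x, (x, w) ∈ ν
  · obtain ⟨x, hx⟩ := hx
    rcases hF.sub _ hx with h | h
    · exact Or.inl (agreeW_of_mem hμ.1 hF.matching h hx)
    · exact Or.inr (agreeW_of_mem hμ'.1 hF.matching h hx)
  · push Not at hx
    by_contra! hn
    unfold agreeW at hn
    simp only [hx, false_iff, not_forall, not_not] at hn
    obtain ⟨⟨m, hm⟩, ⟨m', hm'⟩⟩ := hn
    rcases hF.woman _ _ _ hm hm' with h | h
    · exact hx _ h
    · exact hx _ h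

lemma agreeM_iff_mem (hμ : I.IsStable μ) (hF : InFace I μ μ' ν) {m : M} {w : W}
    (h : (m, w) ∈ μ) : agreeM ν μ m ↔ (m, w) ∈ ν :=
  ⟨fun ha => (ha w).2 h, fun h' => agreeM_of_mem hμ.1 hF.matching h h'⟩

lemma agreeW_iff_mem (hμ : I.IsStable μ) (hF : InFace I μ μ' ν) {m : M} {w : W}
    (h : (m, w) ∈ μ) : agreeW ν μ w ↔ (m, w) ∈ ν :=
  ⟨fun ha => (ha m).2 h, fun h' => agreeW_of_mem hμ.1 hF.matching h h'⟩

lemma agreeM_iff_not_mem (hμ : I.IsStable μ) (hμ' : I.IsStable μ') (hF : InFace I μ μ' ν)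
    {m : M} {w : W} (h : (m, w) ∉ μ) (h' : (m, w) ∈ μ') : agreeM ν μ m ↔ (m, w) ∉ ν :=
  ⟨fun ha hx => h ((ha w).1 hx), fun hn =>
    (agreeM_or hμ hμ' hF m).resolve_right fun ha => hn ((ha w).2 h')⟩

lemma agreeW_iff_not_mem (hμ : I.IsStable μ) (hμ' : I.IsStable μ') (hF : InFace I μ μ' ν)
    {m : M} {w : W} (h : (m, w) ∉ μ) (hm' : (m, w) ∈ μ') : agreeW ν μ w ↔ (m, w) ∉ ν :=
  ⟨fun ha hx => h ((ha m).1 hx), fun hn =>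
    (agreeW_or hμ hμ' hF w).resolve_right fun ha => hn ((ha m).2 hm')⟩

/-- At a nonisolated vertex of `Γ*(μ, μ')`, both agents choose the same one of `μ` and `μ'`. -/
lemma agreeM_iff_agreeW (hμ : I.IsStable μ) (hμ' : I.IsStable μ') (hF : InFace I μ μ' ν)
    {p : M × W} (hp : p ∈ I.starV μ μ') (hn : ¬ (p ∈ μ ∧ p ∈ μ')) :
    agreeM ν μ p.1 ↔ agreeW ν μ p.2 := by
  obtain ⟨m, w⟩ := p
  by_cases h : (m, w) ∈ μ
  · exact (agreeM_iff_mem hμ hF h).trans (agreeW_iff_mem hμ hF h).symm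
  by_cases h' : (m, w) ∈ μ'
  · exact (agreeM_iff_not_mem hμ hμ' hF h h').trans (agreeW_iff_not_mem hμ hμ' hF h h').symm
  rw [mem_starV_iff hμ hμ'] at hp
  rcases hp with hp | hp | ⟨hA, ⟨⟨x, hx, hxl⟩, hM, hW, ⟨y, hy, hyl⟩⟩ |
    ⟨hM, ⟨x, hx, hxl⟩, ⟨y, hy, hyl⟩, hW⟩⟩
  · exact absurd hp h
  · exact absurd hp h'
  · have := hF.wm m w y x hA hM hW hx hxl hy hyl
    exact (agreeM_iff_mem hμ hF hx).trans (this.trans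
      (agreeW_iff_not_mem hμ hμ' hF (fun hh => hW ⟨_, hh, hyl⟩) hy).symm)
  · have := hF.mw m w y x hA hM hW hx hxl hy hyl
    have a := agreeM_iff_not_mem hμ hμ' hF (fun hh => hM ⟨_, hh, hxl⟩) hx
    have b := agreeW_iff_mem hμ hF hy
    exact a.trans ((not_congr this).trans (not_not.trans b.symm))

lemma agreeM_const (hμ : I.IsStable μ) (hμ' : I.IsStable μ') (hF : InFace I μ μ' ν)
    {p q : M × W} (h : I.connIn (I.starV μ μ') p q) : agreeM ν μ p.1 ↔ agreeM ν μ q.1 := by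
  obtain ⟨-, -, h⟩ := h
  induction h with
  | refl => rfl
  | @tail b c _ hbc ih =>
    refine ih.trans ?_
    have nb : ¬ (b ∈ μ ∧ b ∈ μ') := fun hb => not_adjIn_of_mem_inter hμ hμ' hb.1 hb.2 hbc
    have nc : ¬ (c ∈ μ ∧ c ∈ μ') := fun hc =>
      not_adjIn_of_mem_inter hμ hμ' hc.1 hc.2 (adjIn_symm hbc)
    rcases adjIn_cases hbc with ⟨h1, -⟩ | ⟨h1, -⟩
    · rw [h1]
    · rw [agreeM_iff_agreeW hμ hμ' hF hbc.1 nb, agreeM_iff_agreeW hμ hμ' hF hbc.2.1 nc, h1]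

/-- With a single nontrivial component, `ν` makes the same choice at every agent. -/
lemma InFace.eq_or_eq (hμ : I.IsStable μ) (hμ' : I.IsStable μ') (hF : InFace I μ μ' ν)
    (hC : ∀ C D, I.IsNontrivialComp (I.starV μ μ') C → I.IsNontrivialComp (I.starV μ μ') D →
      C = D) : ν = μ ∨ ν = μ' := by
  have sl := subset_starV_left hμ hμ'
  have sr := subset_starV_right hμ hμ'
  have hconst : ∀ p q, p ∈ I.starV μ μ' → q ∈ I.starV μ μ' → ¬ (p ∈ μ ∧ p ∈ μ') →
      ¬ (q ∈ μ ∧ q ∈ μ') → (agreeM ν μ p.1 ↔ agreeM ν μ q.1) := by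
    intro p q hp hq hpn hqn
    have e := hC _ _ (isNontrivialComp_of hμ hμ' hp hpn) (isNontrivialComp_of hμ hμ' hq hqn)
    have : q ∈ {u | I.connIn (I.starV μ μ') p u} := e ▸ connIn_refl hq
    exact agreeM_const hμ hμ' hF this
  by_cases hall : ∀ p ∈ I.starV μ μ', ¬ (p ∈ μ ∧ p ∈ μ') → agreeM ν μ p.1
  · left
    ext p
    by_cases hb : p ∈ μ ∧ p ∈ μ'
    · exact ⟨fun _ => hb.1, fun _ => hF.inter p hb.1 hb.2⟩
    by_cases hu : p ∈ μ ∨ p ∈ μ'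
    · exact hall p (hu.elim (@sl p) (@sr p)) hb p.2
    · exact ⟨fun h => absurd (hF.sub p h) hu, fun h => absurd (Or.inl h) hu⟩
  · right
    push Not at hall
    obtain ⟨q, hq, hqn, hqa⟩ := hall
    ext p
    by_cases hb : p ∈ μ ∧ p ∈ μ'
    · exact ⟨fun _ => hb.2, fun _ => hF.inter p hb.1 hb.2⟩
    by_cases hu : p ∈ μ ∨ p ∈ μ'
    · have hpS : p ∈ I.starV μ μ' := hu.elim (@sl p) (@sr p)
      have hpa : ¬ agreeM ν μ p.1 := fun h => hqa
        ((hconst p q hpS hq hb (fun h => hqn h.1 h.2)).1 h)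
      exact (agreeM_or hμ hμ' hF p.1).resolve_left hpa p.2
    · exact ⟨fun h => absurd (hF.sub p h) hu, fun h => absurd (Or.inr h) hu⟩

end choice

end SMTI

open SMTI in

theorem stmt11 {M W : Type*} [Fintype M] [Fintype W] (I : SMTI M W)
    (μ μ' : Set (M × W)) (hμ : I.IsStable μ) (hμ' : I.IsStable μ') (hne : μ ≠ μ') :
    I.AdjacentSM μ μ' ↔ ∃! C, I.IsNontrivialComp (I.starV μ μ') C := by
  constructor
  · intro hadj
    obtain ⟨v, hv⟩ : ∃ v, ¬ (v ∈ μ ↔ v ∈ μ') := by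
      by_contra! h
      exact hne (Set.ext h)
    have hvS : v ∈ I.starV μ μ' := by
      rw [mem_starV_iff hμ hμ']
      tauto
    exact ⟨_, isNontrivialComp_of hμ hμ' hvS (by tauto),
      fun D hD => comp_unique_of_adjacent hμ hμ' hadj hD
        (isNontrivialComp_of hμ hμ' hvS (by tauto))⟩
  · rintro hC
    refine ⟨fun h => hne (chi_injective h), ?_⟩
    intro T c hT hc h1 hs ν hν hcν
    rcases (inFace hμ hμ' hT hc h1 hs hν hcν).eq_or_eq hμ hμ'
      (fun C D h h' => hC.unique h h') with h | h
    · exact Or.inl (congrArg chi h)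
    · exact Or.inr (congrArg chi h)
end

section
/- Let μ and μ' be stable matchings and let μ̇ be a matching with μ̇ ⊆ V(Γ*(μ,μ')). If (i) μ̇ contains all isolated vertices of Γ*(μ,μ'), and (ii) for every nontrivial weakly connected component C of Γ*(μ,μ'), the restriction of μ̇ to the vertex set of C equals the restriction of μ to C or the restriction of μ' to C, then μ̇ is a stable matching. -/
/-!
Let `S = V(Γ*(μ, μ'))`. It contains `μ` and `μ'`, and since preferences are total, all vertices
of `S` sharing a person are pairwise adjacent. Hence on the row and the column of a vertex
`p ∈ S` the matching `μd` agrees with one and the same of `μ`, `μ'` (`agree_of_mem_starV`):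
if `p` is not isolated its component is nontrivial and contains the row and the column,
while an isolated `p` belongs to `μ`, as both its members would otherwise be single in `μ` and
`p` would block `μ`. In particular every person has in `μd` the partner given by `μ` or by `μ'`.

Suppose that `(m, w)` blocks `μd`. By stability of `μ` and `μ'`, one of `m`, `w` follows `μ` and
the other follows `μ'`, say `μd(m) = μ(m)` and `μd(w) = μ'(w)`. Then `μ(m) <_m w`, so stability of
`μ` yields `m ≤_w μ(w)`; and `μ'(w) <_w m`, so stability of `μ'` yields `w ≤_m μ'(m)`. Thus `(m, w)`
lies between the partners on both sides, i.e. `(m, w) ∈ S` (`mem_starV_of_mixed`), and so `m` and `w`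
follow the same matching after all. No finiteness is needed.
-/

open scoped Classical

namespace SMTI

variable {M W : Type*} {I : SMTI M W} {μ μ' μd : Set (M × W)}

lemma mpartner_spec (μ : Set (M × W)) (m : M) :
    mpartner μ m = none ∨ ∃ w, mpartner μ m = some w ∧ (m, w) ∈ μ := by
  unfold mpartner
  split_ifs with h
  · exact Or.inr ⟨_, rfl, h.choose_spec⟩
  · exact Or.inl rfl

lemma wpartner_spec (μ : Set (M × W)) (w : W) :
    wpartner μ w = none ∨ ∃ m, wpartner μ w = some m ∧ (m, w) ∈ μ := by
  unfold wpartner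
  split_ifs with h
  · exact Or.inr ⟨_, rfl, h.choose_spec⟩
  · exact Or.inl rfl

lemma IsMatching.mpartner_eq (h : I.IsMatching μ) {m : M} {w : W} (hp : (m, w) ∈ μ) :
    mpartner μ m = some w := by
  have hex : ∃ w, (m, w) ∈ μ := ⟨w, hp⟩
  unfold mpartner
  rw [dif_pos hex, h.2.1 m _ w hex.choose_spec hp]

lemma IsMatching.wpartner_eq (h : I.IsMatching μ) {m : M} {w : W} (hp : (m, w) ∈ μ) :
    wpartner μ w = some m := by
  have hex : ∃ m, (m, w) ∈ μ := ⟨m, hp⟩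
  unfold wpartner
  rw [dif_pos hex, h.2.2 _ m w hex.choose_spec hp]

lemma mpartner_congr {m : M} (h : ∀ w, (m, w) ∈ μd ↔ (m, w) ∈ μ) :
    mpartner μd m = mpartner μ m := by
  simp only [mpartner, h]

lemma wpartner_congr {w : W} (h : ∀ m, (m, w) ∈ μd ↔ (m, w) ∈ μ) :
    wpartner μd w = wpartner μ w := by
  simp only [wpartner, h]

lemma mltO_of_not_mleO (h : I.IsMatching μ) {m : M} {w : W} (hp : (m, w) ∈ I.Acc)
    (hn : ¬ I.mleO m (some w) (mpartner μ m)) : I.mltO m (mpartner μ m) (some w) := by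
  refine ⟨?_, hn⟩
  rcases mpartner_spec μ m with e | ⟨w', e, hw'⟩
  · rw [e]; exact hp
  · rw [e] at hn ⊢
    exact (I.mle_total m w w' hp (h.1 hw')).resolve_left hn

lemma wltO_of_not_wleO (h : I.IsMatching μ) {m : M} {w : W} (hp : (m, w) ∈ I.Acc)
    (hn : ¬ I.wleO w (some m) (wpartner μ w)) : I.wltO w (wpartner μ w) (some m) := by
  refine ⟨?_, hn⟩
  rcases wpartner_spec μ w with e | ⟨m', e, hm'⟩
  · rw [e]; exact hp
  · rw [e] at hn ⊢
    exact (I.wle_total w m m' hp (h.1 hm')).resolve_left hn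

lemma starV_comm_s13 : I.starV μ μ' = I.starV μ' μ := by
  ext p
  simp only [starV, betweenM, betweenW, Set.mem_ofPred_eq]
  tauto

lemma subset_starV_left_s13 (h : I.IsMatching μ) : μ ⊆ I.starV μ μ' := by
  rintro ⟨m, w⟩ hp
  exact ⟨h.1 hp, Or.inl (h.mpartner_eq hp).symm, Or.inl (h.wpartner_eq hp).symm⟩

/-- A pair whose man strictly prefers it to `μ` and whose woman strictly prefers it to `μ'` is a
vertex of `Γ*(μ, μ')`: stability bounds the pair from above by `μ'` for the man and by `μ` for the
woman. -/
lemma mem_starV_of_mixed (hμ : I.IsStable μ) (hμ' : I.IsStable μ') {m : M} {w : W}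
    (hp : (m, w) ∈ I.Acc) (h1 : ¬ I.mleO m (some w) (mpartner μ m))
    (h2 : ¬ I.wleO w (some m) (wpartner μ' w)) : (m, w) ∈ I.starV μ μ' :=
  ⟨hp,
    Or.inr (Or.inr (Or.inl
      ⟨mltO_of_not_mleO hμ.1 hp h1, (hμ'.2 _ hp).resolve_right h2⟩)),
    Or.inr (Or.inr (Or.inr
      ⟨wltO_of_not_wleO hμ'.1 hp h2, (hμ.2 _ hp).resolve_left h1⟩))⟩

lemma adjIn_of_same_man {S : Set (M × W)} (hS : S ⊆ I.Acc) {m : M} {w w' : W}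
    (h : (m, w) ∈ S) (h' : (m, w') ∈ S) (hne : w ≠ w') : I.adjIn S (m, w) (m, w') := by
  refine ⟨h, h', ?_⟩
  rcases I.mle_total m w w' (hS h) (hS h') with hle | hle
  · exact Or.inl ⟨hS h, hS h', Or.inl ⟨rfl, hne, hle⟩⟩
  · exact Or.inr ⟨hS h', hS h, Or.inl ⟨rfl, hne.symm, hle⟩⟩

lemma adjIn_of_same_woman {S : Set (M × W)} (hS : S ⊆ I.Acc) {m m' : M} {w : W}
    (h : (m, w) ∈ S) (h' : (m', w) ∈ S) (hne : m ≠ m') : I.adjIn S (m, w) (m', w) := by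
  refine ⟨h, h', ?_⟩
  rcases I.wle_total w m m' (hS h) (hS h') with hle | hle
  · exact Or.inl ⟨hS h, hS h', Or.inr ⟨rfl, hne, hle⟩⟩
  · exact Or.inr ⟨hS h', hS h, Or.inr ⟨rfl, hne.symm, hle⟩⟩

lemma adjIn.ne {S : Set (M × W)} {p q : M × W} (h : I.adjIn S p q) : p ≠ q := by
  rintro rfl
  rcases h.2.2 with h | h <;> rcases h.2.2 with h | h <;> exact h.2.1 rfl

/-- An isolated vertex of a set `S ⊇ μ` belongs to the stable matching `μ`; otherwise both its
members are single in `μ` and it blocks `μ`. -/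
lemma IsIsolated.mem {S : Set (M × W)} (hS : S ⊆ I.Acc) (hμ : I.IsStable μ) (hsub : μ ⊆ S)
    {p : M × W} (h : I.IsIsolated S p) : p ∈ μ := by
  obtain ⟨m, w⟩ := p
  by_contra hn
  have hm : mpartner μ m = none := by
    refine (mpartner_spec μ m).resolve_right ?_
    rintro ⟨w', -, hw'⟩
    refine h.2 _ (adjIn_of_same_man hS h.1 (hsub hw') ?_)
    rintro rfl
    exact hn hw'
  have hw : wpartner μ w = none := by
    refine (wpartner_spec μ w).resolve_right ?_
    rintro ⟨m', -, hm'⟩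
    refine h.2 _ (adjIn_of_same_woman hS h.1 (hsub hm') ?_)
    rintro rfl
    exact hn hm'
  have := hμ.2 _ (hS h.1)
  simp only [hm, hw] at this
  exact this.elim id id

/-- Both members of a vertex `(m, w)` of `Γ*(μ, μ')` have in `μd` the partners that one common
matching among `μ`, `μ'` assigns to them. -/
lemma agree_of_mem_starV (hμ : I.IsStable μ) (hμ' : I.IsStable μ')
    (hm : I.IsMatching μd) (hsub : μd ⊆ I.starV μ μ')
    (hiso : ∀ v, I.IsIsolated (I.starV μ μ') v → v ∈ μd)
    (hcomp : ∀ C, I.IsNontrivialComp (I.starV μ μ') C →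
      μd ∩ C = μ ∩ C ∨ μd ∩ C = μ' ∩ C) {m : M} {w : W} (hp : (m, w) ∈ I.starV μ μ') :
    (mpartner μd m = mpartner μ m ∧ wpartner μd w = wpartner μ w) ∨
      (mpartner μd m = mpartner μ' m ∧ wpartner μd w = wpartner μ' w) := by
  have hS : I.starV μ μ' ⊆ I.Acc := fun _ h => h.1
  have hsμ : μ ⊆ I.starV μ μ' := subset_starV_left_s13 hμ.1
  have hsμ' : μ' ⊆ I.starV μ μ' := starV_comm_s13 (I := I) ▸ subset_starV_left_s13 hμ'.1
  by_cases hi : I.IsIsolated (I.starV μ μ') (m, w)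
  · have h1 := hiso _ hi
    have h2 := hi.mem hS hμ hsμ
    exact Or.inl ⟨by rw [hm.mpartner_eq h1, hμ.1.mpartner_eq h2],
      by rw [hm.wpartner_eq h1, hμ.1.wpartner_eq h2]⟩
  · obtain ⟨q, hq⟩ : ∃ q, I.adjIn (I.starV μ μ') (m, w) q := by
      by_contra hno
      exact hi ⟨hp, fun q hq => hno ⟨q, hq⟩⟩
    set C := {u | I.connIn (I.starV μ μ') (m, w) u} with hC
    have hpC : (m, w) ∈ C := ⟨hp, hp, .refl⟩
    have hadj : ∀ {u}, I.adjIn (I.starV μ μ') (m, w) u → u ∈ C :=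
      fun h => ⟨hp, h.2.1, .single h⟩
    have hrow : ∀ w', (m, w') ∈ I.starV μ μ' → (m, w') ∈ C := by
      intro w' h'
      by_cases e : w = w'
      · exact e ▸ hpC
      · exact hadj (adjIn_of_same_man hS hp h' e)
    have hcol : ∀ m', (m', w) ∈ I.starV μ μ' → (m', w) ∈ C := by
      intro m' h'
      by_cases e : m = m'
      · exact e ▸ hpC
      · exact hadj (adjIn_of_same_woman hS hp h' e)
    have key : ∀ ν : Set (M × W), ν ⊆ I.starV μ μ' → μd ∩ C = ν ∩ C →
        mpartner μd m = mpartner ν m ∧ wpartner μd w = wpartner ν w := by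
      intro ν hν he
      have hmem : ∀ u ∈ C, u ∈ μd ↔ u ∈ ν := fun u hu => by
        have := Set.ext_iff.1 he u
        simpa [hu] using this
      exact ⟨mpartner_congr fun w' =>
          ⟨fun h => (hmem _ (hrow w' (hsub h))).1 h, fun h => (hmem _ (hrow w' (hν h))).2 h⟩,
        wpartner_congr fun m' =>
          ⟨fun h => (hmem _ (hcol m' (hsub h))).1 h, fun h => (hmem _ (hcol m' (hν h))).2 h⟩⟩
    have hnt : I.IsNontrivialComp (I.starV μ μ') C :=
      ⟨⟨_, hp, hC⟩, fun hs => hq.ne (hs hpC (hadj hq))⟩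
    exact (hcomp C hnt).imp (key μ hsμ) (key μ' hsμ')

end SMTI

open SMTI in

theorem stmt13 {M W : Type*} (I : SMTI M W) (μ μ' μd : Set (M × W))
    (hμ : I.IsStable μ) (hμ' : I.IsStable μ')
    (hm : I.IsMatching μd) (hsub : μd ⊆ I.starV μ μ')
    (hiso : ∀ v, I.IsIsolated (I.starV μ μ') v → v ∈ μd)
    (hcomp : ∀ C, I.IsNontrivialComp (I.starV μ μ') C →
      μd ∩ C = μ ∩ C ∨ μd ∩ C = μ' ∩ C) :
    I.IsStable μd := by
  have hsμ : μ ⊆ I.starV μ μ' := subset_starV_left_s13 hμ.1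
  have agree : ∀ {m w}, (m, w) ∈ I.starV μ μ' →
      (mpartner μd m = mpartner μ m ∧ wpartner μd w = wpartner μ w) ∨
        (mpartner μd m = mpartner μ' m ∧ wpartner μd w = wpartner μ' w) :=
    fun hp => agree_of_mem_starV hμ hμ' hm hsub hiso hcomp hp
  -- A person without any vertex in `Γ*(μ, μ')` is single in both `μd` and `μ`.
  have hman : ∀ m, mpartner μd m = mpartner μ m ∨ mpartner μd m = mpartner μ' m := by
    intro m
    by_cases h : ∃ w, (m, w) ∈ I.starV μ μ'
    · obtain ⟨w, hw⟩ := h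
      exact (agree hw).imp And.left And.left
    · exact Or.inl (mpartner_congr fun w =>
        ⟨fun hw => (h ⟨w, hsub hw⟩).elim, fun hw => (h ⟨w, hsμ hw⟩).elim⟩)
  have hwoman : ∀ w, wpartner μd w = wpartner μ w ∨ wpartner μd w = wpartner μ' w := by
    intro w
    by_cases h : ∃ m, (m, w) ∈ I.starV μ μ'
    · obtain ⟨m, hm'⟩ := h
      exact (agree hm').imp And.right And.right
    · exact Or.inl (wpartner_congr fun m =>
        ⟨fun hw => (h ⟨m, hsub hw⟩).elim, fun hw => (h ⟨m, hsμ hw⟩).elim⟩)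
  refine ⟨hm, ?_⟩
  rintro ⟨m, w⟩ hp
  by_contra hblock
  obtain ⟨h1, h2⟩ := not_or.1 hblock
  -- A vertex of `Γ*(μ, μ')` cannot block `μd`, as it would block `μ` or `μ'`.
  have hnot : (m, w) ∉ I.starV μ μ' := by
    intro hv
    rcases agree hv with ⟨e1, e2⟩ | ⟨e1, e2⟩
    · exact hblock (by simpa only [e1, e2] using hμ.2 _ hp)
    · exact hblock (by simpa only [e1, e2] using hμ'.2 _ hp)
  rcases hman m with e1 | e1 <;> rcases hwoman w with e2 | e2
  · exact hblock (by simpa only [e1, e2] using hμ.2 _ hp)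
  · exact hnot (mem_starV_of_mixed hμ hμ' hp (e1 ▸ h1) (e2 ▸ h2))
  · exact hnot (starV_comm_s13 (I := I) ▸ mem_starV_of_mixed hμ' hμ hp (e1 ▸ h1) (e2 ▸ h2))
  · exact hblock (by simpa only [e1, e2] using hμ'.2 _ hp)
end
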